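/- arXiv:1110.4622 — 2 statements merged into one kernel-verified Lean document; each statement's English description precedes it below -/
import Mathlib

section
/- Let ρ, ρ_0 : [-1,1] → (0,1) be C^1 functions. There exists a constant C_0' > 0, depending only on ρ and ρ_0, such that for every integer N ≥ 1 and every probability measure μ on S_N, D_{0,N}( √(dμ/dν_N^ρ), ν_N^ρ ) ≤ 2 D_{0,N}( √(dμ/dν_N^{ρ_0}), ν_N^{ρ_0} ) + C_0' / N, where for a probability measure ν with ν(η) > 0 for all η, dμ/dν denotes the function η ↦ μ(η)/ν(η). -/
open MeasureTheory Set

noncomputable section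

/-- The sites of the finite lattice `Λ_N = {-N, …, N}`. -/
abbrev Site (N : ℕ) := {x : ℤ // x ∈ Finset.Icc (-(N:ℤ)) (N:ℤ)}

/-- The configuration space `S_N = {0,1}^{Λ_N}`. -/
abbrev Conf (N : ℕ) := Site N → Bool

/-- The value of the configuration `η` at the integer site `x` (false outside `Λ_N`). -/
def getC (N : ℕ) (η : Conf N) (x : ℤ) : Bool :=
  if h : x ∈ Finset.Icc (-(N:ℤ)) (N:ℤ) then η ⟨x, h⟩ else false

/-- The configuration obtained from `η` by exchanging the values at `x` and `y`. -/
def exchC (N : ℕ) (η : Conf N) (x y : ℤ) : Conf N :=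
  fun z => if (z:ℤ) = x then getC N η y else if (z:ℤ) = y then getC N η x else η z

/-- The Bernoulli product measure on `S_N` with slowly varying profile `θ`. -/
def bernProf (N : ℕ) (θ : ℝ → ℝ) (η : Conf N) : ℝ :=
  ∏ x : Site N, (if η x then θ (((x:ℤ):ℝ)/(N:ℝ)) else 1 - θ (((x:ℤ):ℝ)/(N:ℝ)))

/-- The Dirichlet form `D_{0,N}(h,ν) = Σ_{x=-N}^{N-1} ∫ (h(η^{x,x+1}) - h(η))² dν`. -/
def D0 (N : ℕ) (h : Conf N → ℝ) (ν : Conf N → ℝ) : ℝ :=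
  ∑ x ∈ Finset.Icc (-(N:ℤ)) ((N:ℤ) - 1), ∑ η : Conf N,
    ν η * (h (exchC N η x (x+1)) - h η)^2

/-!
With `f = √(dμ/dν)`, a single exchange `σ` contributes
`ν(η) (f(ση) - f(η))² = (√μ(ση) · √(ν(η)/ν(ση)) - √μ(η))²`, so the reference measure enters only
through `√(ν(η)/ν(ση))`. For a Bernoulli measure with a Lipschitz profile bounded away from `0` and
`1`, this factor is `1 + O(1/N)` at nearest neighbours. Trading `ν^ρ` for `ν^{ρ₀}` thus costs a
factor `2` and an error `O(1/N²)` per bond, and there are `2N` bonds.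
-/

section RealInequalities

lemma abs_sqrt_sub_one_le_abs_sub_one (r : ℝ) : |√r - 1| ≤ |r - 1| := by
  rcases le_total r 0 with hr | hr
  · rw [Real.sqrt_eq_zero_of_nonpos hr, abs_of_neg (by norm_num), abs_of_neg (by linarith)]
    linarith
  · have factorization : r - 1 = (√r - 1) * (√r + 1) := by linarith [Real.mul_self_sqrt hr]
    rw [factorization, abs_mul]
    refine le_mul_of_one_le_right (abs_nonneg _) (le_abs.2 (.inl ?_))
    linarith [Real.sqrt_nonneg r]

lemma mul_sqrt_div_sub_sqrt_div_sq (A B : ℝ) {p q : ℝ} (hp : 0 < p) (hq : 0 ≤ q) :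
    p * (√(A / q) - √(B / p)) ^ 2 = (√A * √(p / q) - √B) ^ 2 := by
  have hsqrt : √p ≠ 0 := (Real.sqrt_pos.2 hp).ne'
  calc p * (√(A / q) - √(B / p)) ^ 2
      = (√p * (√A / √q - √B / √p)) ^ 2 := by
        rw [mul_pow, Real.sq_sqrt hp.le, Real.sqrt_div' A hq, Real.sqrt_div' B hp.le]
    _ = (√A * √(p / q) - √B) ^ 2 := by
        rw [Real.sqrt_div' p hq, mul_sub, mul_div_cancel₀ _ hsqrt]
        ring

lemma mul_sub_sq_le_of_abs_sub_le (x y : ℝ) {s t ε : ℝ} (hst : |s - t| ≤ ε) :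
    (x * s - y) ^ 2 ≤ 2 * (x * t - y) ^ 2 + 2 * ε ^ 2 * x ^ 2 := by
  have hsq : (s - t) ^ 2 ≤ ε ^ 2 := sq_le_sq.2 (hst.trans (le_abs_self ε))
  calc (x * s - y) ^ 2 = ((x * t - y) + x * (s - t)) ^ 2 := by ring
    _ ≤ 2 * ((x * t - y) ^ 2 + (x * (s - t)) ^ 2) := add_sq_le
    _ = 2 * (x * t - y) ^ 2 + 2 * (s - t) ^ 2 * x ^ 2 := by ring
    _ ≤ 2 * (x * t - y) ^ 2 + 2 * ε ^ 2 * x ^ 2 := by gcongr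

end RealInequalities

lemma exists_mapsTo_Icc_of_mapsTo_Ioo {X : Type*} [TopologicalSpace X] {s : Set X}
    (hs : IsCompact s) {f : X → ℝ} (hf : ContinuousOn f s) {a b : ℝ} (hfs : MapsTo f s (Ioo a b)) :
    ∃ m > 0, MapsTo f s (Icc (a + m) (b - m)) := by
  obtain ⟨m, hm, hle⟩ := hs.exists_forall_le' (f := fun x ↦ min (f x - a) (b - f x)) (a := 0)
    ((hf.sub continuousOn_const).inf (continuousOn_const.sub hf))
    fun x hx ↦ lt_min (sub_pos.2 (hfs hx).1) (sub_pos.2 (hfs hx).2)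
  refine ⟨m, hm, fun x hx ↦ ?_⟩
  obtain ⟨hleft, hright⟩ := le_min_iff.1 (hle x hx)
  exact ⟨by linarith, by linarith⟩

section SingleMove

variable {α : Type*}

/-- The density root `√(dμ/dν)` of weights `μ` with respect to reference weights `ν`; it takes the
value `0` where `ν` vanishes. -/
def sqrtDensity (μ ν : α → ℝ) (η : α) : ℝ := √(μ η / ν η)

/-- The Dirichlet form of a single move `σ` of configurations; the form `D0` is the sum of these
over the nearest-neighbour exchanges. -/
def moveForm [Fintype α] (σ : α → α) (h ν : α → ℝ) : ℝ := ∑ η, ν η * (h (σ η) - h η) ^ 2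

lemma moveForm_sqrtDensity_eq [Fintype α] (σ : α → α) (μ : α → ℝ) {ν : α → ℝ} (hν : ∀ η, 0 < ν η) :
    moveForm σ (sqrtDensity μ ν) ν = ∑ η, (√(μ (σ η)) * √(ν η / ν (σ η)) - √(μ η)) ^ 2 :=
  Finset.sum_congr rfl fun η _ ↦ mul_sqrt_div_sub_sqrt_div_sq _ _ (hν η) (hν (σ η)).le

lemma moveForm_sqrtDensity_le [Fintype α] {σ : α → α} (hσ : σ.Bijective) {μ ν ν₀ : α → ℝ}
    (hμ : ∀ η, 0 ≤ μ η) (hν : ∀ η, 0 < ν η) (hν₀ : ∀ η, 0 < ν₀ η) {ε : ℝ}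
    (hε : ∀ η, |√(ν η / ν (σ η)) - √(ν₀ η / ν₀ (σ η))| ≤ ε) :
    moveForm σ (sqrtDensity μ ν) ν ≤
      2 * moveForm σ (sqrtDensity μ ν₀) ν₀ + 2 * ε ^ 2 * ∑ η, μ η := by
  rw [moveForm_sqrtDensity_eq σ μ hν, moveForm_sqrtDensity_eq σ μ hν₀, ← hσ.sum_comp μ,
    Finset.mul_sum, Finset.mul_sum, ← Finset.sum_add_distrib]
  refine Finset.sum_le_sum fun η _ ↦ ?_
  simpa only [Real.sq_sqrt (hμ (σ η))] using
    mul_sub_sq_le_of_abs_sub_le √(μ (σ η)) √(μ η) (hε η)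

end SingleMove

lemma prod_mul_apply_swap {ι β M : Type*} [Fintype ι] [DecidableEq ι] [CommMonoid M]
    (f : ι → β → M) (η : ι → β) (a b : ι) :
    (∏ i, f i (η i)) * (f a (η b) * f b (η a)) =
      (∏ i, f i (η (Equiv.swap a b i))) * (f a (η a) * f b (η b)) := by
  obtain rfl | hab := eq_or_ne a b
  · simp
  have off_pair : ∏ i ∈ {a, b}ᶜ, f i (η (Equiv.swap a b i)) = ∏ i ∈ {a, b}ᶜ, f i (η i) := by
    refine Finset.prod_congr rfl fun i hi ↦ ?_
    simp only [Finset.mem_compl, Finset.mem_insert, Finset.mem_singleton, not_or] at hi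
    rw [Equiv.swap_apply_of_ne_of_ne hi.1 hi.2]
  rw [← Finset.prod_mul_prod_compl {a, b} fun i ↦ f i (η i),
    ← Finset.prod_mul_prod_compl {a, b} fun i ↦ f i (η (Equiv.swap a b i)), off_pair,
    Finset.prod_pair hab, Finset.prod_pair hab, Equiv.swap_apply_left, Equiv.swap_apply_right]
  ac_rfl

section BernoulliWeight

/-- The mass that the Bernoulli law of parameter `p` gives to the occupation value `c`: the
one-site factor of `bernProf`. -/
def bernWeight (p : ℝ) (c : Bool) : ℝ := if c then p else 1 - p

lemma bernWeight_pos {p : ℝ} (hp : p ∈ Ioo (0 : ℝ) 1) (c : Bool) : 0 < bernWeight p c := by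
  cases c
  · simpa [bernWeight] using hp.2
  · simpa [bernWeight] using hp.1

lemma le_bernWeight {m p : ℝ} (hp : p ∈ Icc m (1 - m)) (c : Bool) : m ≤ bernWeight p c := by
  cases c
  · simpa [bernWeight] using le_sub_comm.1 hp.2
  · simpa [bernWeight] using hp.1

lemma abs_bernWeight_mul_sub_mul_le (p q : ℝ) (c d : Bool) :
    |bernWeight p c * bernWeight q d - bernWeight p d * bernWeight q c| ≤ |p - q| := by
  cases c <;> cases d <;> simp only [bernWeight, Bool.false_eq_true, if_true, if_false]
  · simp
  · rw [abs_sub_comm p q]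
    exact (congrArg abs (by ring)).le
  · exact (congrArg abs (by ring)).le
  · simp

lemma abs_bernWeight_mul_div_mul_sub_one_le {m p q : ℝ} (hm : 0 < m) (hp : p ∈ Icc m (1 - m))
    (hq : q ∈ Icc m (1 - m)) (c d : Bool) :
    |bernWeight p c * bernWeight q d / (bernWeight p d * bernWeight q c) - 1| ≤
      |p - q| / m ^ 2 := by
  have hden : m ^ 2 ≤ bernWeight p d * bernWeight q c := by
    rw [sq]
    exact mul_le_mul (le_bernWeight hp d) (le_bernWeight hq c) hm.le
      (hm.le.trans (le_bernWeight hp d))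
  have hpos : 0 < bernWeight p d * bernWeight q c := (pow_pos hm 2).trans_le hden
  rw [div_sub_one hpos.ne', abs_div, abs_of_pos hpos]
  exact div_le_div₀ (abs_nonneg _) (abs_bernWeight_mul_sub_mul_le p q c d) (pow_pos hm 2) hden

end BernoulliWeight

section Lattice

variable {N : ℕ}

lemma site_div_mem_Icc (a : Site N) : ((a : ℤ) : ℝ) / N ∈ Icc (-1 : ℝ) 1 := by
  have habs : |((a : ℤ) : ℝ)| ≤ N := by exact_mod_cast abs_le.2 (Finset.mem_Icc.1 a.2)
  rw [mem_Icc, ← abs_le, abs_div, Nat.abs_cast]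
  exact div_le_one_of_le₀ habs N.cast_nonneg

lemma exists_site_eq_of_mem_Icc {x : ℤ} (hx : x ∈ Finset.Icc (-(N : ℤ)) (N - 1)) :
    ∃ a b : Site N, (a : ℤ) = x ∧ (b : ℤ) = x + 1 := by
  rw [Finset.mem_Icc] at hx
  exact ⟨⟨x, Finset.mem_Icc.2 (by omega)⟩, ⟨x + 1, Finset.mem_Icc.2 (by omega)⟩, rfl, rfl⟩

lemma exchC_eq_comp_swap (η : Conf N) (a b : Site N) : exchC N η a b = η ∘ Equiv.swap a b := by
  funext z
  simp only [exchC, getC, dif_pos a.2, dif_pos b.2, ← Subtype.ext_iff, Function.comp_apply,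
    Equiv.swap_apply_def, apply_ite η]

lemma exchC_bijective (a b : Site N) : (fun η ↦ exchC N η a b).Bijective := by
  refine Function.Involutive.bijective fun η ↦ ?_
  funext z
  simp only [exchC_eq_comp_swap, Function.comp_apply, Equiv.swap_apply_self]

lemma bernProf_pos {θ : ℝ → ℝ} (hθ : MapsTo θ (Icc (-1) 1) (Ioo 0 1)) (η : Conf N) :
    0 < bernProf N θ η :=
  Finset.prod_pos fun a _ ↦ bernWeight_pos (hθ (site_div_mem_Icc a)) (η a)

lemma bernProf_div_bernProf_exchC {θ : ℝ → ℝ} (hθ : MapsTo θ (Icc (-1) 1) (Ioo 0 1))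
    (η : Conf N) (a b : Site N) :
    bernProf N θ η / bernProf N θ (exchC N η a b) =
      bernWeight (θ ((a : ℤ) / N)) (η a) * bernWeight (θ ((b : ℤ) / N)) (η b) /
        (bernWeight (θ ((a : ℤ) / N)) (η b) * bernWeight (θ ((b : ℤ) / N)) (η a)) := by
  have weight_ne_zero (a : Site N) (c : Bool) : bernWeight (θ ((a : ℤ) / N)) c ≠ 0 :=
    (bernWeight_pos (hθ (site_div_mem_Icc a)) c).ne'
  rw [div_eq_div_iff (bernProf_pos hθ _).ne'
    (mul_ne_zero (weight_ne_zero a _) (weight_ne_zero b _)), exchC_eq_comp_swap,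
    mul_comm (_ * _) (bernProf _ _ _)]
  exact prod_mul_apply_swap (fun a : Site N ↦ bernWeight (θ ((a : ℤ) / N))) η a b

lemma abs_sqrt_bernProf_div_exchC_sub_one_le {θ : ℝ → ℝ} {m : ℝ} {K : NNReal} (hm : 0 < m)
    (hθ : MapsTo θ (Icc (-1) 1) (Icc m (1 - m))) (hK : LipschitzOnWith K θ (Icc (-1) 1))
    {x : ℤ} (hx : x ∈ Finset.Icc (-(N : ℤ)) (N - 1)) (η : Conf N) :
    |√(bernProf N θ η / bernProf N θ (exchC N η x (x + 1))) - 1| ≤ K / m ^ 2 / N := by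
  obtain ⟨a, b, rfl, hab⟩ := exists_site_eq_of_mem_Icc hx
  have ha := site_div_mem_Icc a
  have hb := site_div_mem_Icc b
  have hIoo : MapsTo θ (Icc (-1) 1) (Ioo 0 1) :=
    hθ.mono_right (Icc_subset_Ioo hm (sub_lt_self 1 hm))
  have profile_increment : |θ ((a : ℤ) / N) - θ ((b : ℤ) / N)| ≤ K / N := by
    have spacing : |((a : ℤ) : ℝ) / N - (b : ℤ) / N| = 1 / N := by
      rw [← sub_div, hab, abs_div, Nat.abs_cast]
      simp
    simpa only [Real.dist_eq, spacing, mul_one_div] using hK.dist_le_mul _ ha _ hb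
  calc |√(bernProf N θ η / bernProf N θ (exchC N η a (a + 1))) - 1|
      ≤ |bernProf N θ η / bernProf N θ (exchC N η a (a + 1)) - 1| :=
        abs_sqrt_sub_one_le_abs_sub_one _
    _ ≤ |θ ((a : ℤ) / N) - θ ((b : ℤ) / N)| / m ^ 2 := by
        rw [← hab, bernProf_div_bernProf_exchC hIoo]
        exact abs_bernWeight_mul_div_mul_sub_one_le hm (hθ ha) (hθ hb) _ _
    _ ≤ K / N / m ^ 2 := by gcongr
    _ = K / m ^ 2 / N := div_right_comm _ _ _

lemma D0_sqrtDensity_le {μ ν ν₀ : Conf N → ℝ} (hμ : ∀ η, 0 ≤ μ η) (hν : ∀ η, 0 < ν η)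
    (hν₀ : ∀ η, 0 < ν₀ η) {ε : ℝ}
    (hε : ∀ x ∈ Finset.Icc (-(N : ℤ)) (N - 1), ∀ η,
      |√(ν η / ν (exchC N η x (x + 1))) - √(ν₀ η / ν₀ (exchC N η x (x + 1)))| ≤ ε) :
    D0 N (sqrtDensity μ ν) ν ≤
      2 * D0 N (sqrtDensity μ ν₀) ν₀ + 4 * N * ε ^ 2 * ∑ η, μ η := by
  have bond_count : (Finset.Icc (-(N : ℤ)) (N - 1)).card = 2 * N := by
    rw [Int.card_Icc]
    omega
  calc D0 N (sqrtDensity μ ν) ν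
      ≤ ∑ x ∈ Finset.Icc (-(N : ℤ)) (N - 1),
          (2 * moveForm (fun η ↦ exchC N η x (x + 1)) (sqrtDensity μ ν₀) ν₀ +
            2 * ε ^ 2 * ∑ η, μ η) := by
        refine Finset.sum_le_sum fun x hx ↦ moveForm_sqrtDensity_le ?_ hμ hν hν₀ (hε x hx)
        obtain ⟨a, b, rfl, hab⟩ := exists_site_eq_of_mem_Icc hx
        exact hab ▸ exchC_bijective a b
    _ = 2 * D0 N (sqrtDensity μ ν₀) ν₀ + 4 * N * ε ^ 2 * ∑ η, μ η := by
        rw [Finset.sum_add_distrib, ← Finset.mul_sum, Finset.sum_const, bond_count, nsmul_eq_mul,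
          D0]
        simp only [moveForm]
        push_cast
        ring

lemma D0_sqrtDensity_bernProf_le {ρ ρ₀ : ℝ → ℝ} {m m₀ : ℝ} {K K₀ : NNReal} (hm : 0 < m)
    (hm₀ : 0 < m₀) (hρ : MapsTo ρ (Icc (-1) 1) (Icc m (1 - m)))
    (hρ₀ : MapsTo ρ₀ (Icc (-1) 1) (Icc m₀ (1 - m₀)))
    (hK : LipschitzOnWith K ρ (Icc (-1) 1)) (hK₀ : LipschitzOnWith K₀ ρ₀ (Icc (-1) 1))
    {μ : Conf N → ℝ} (hμ : ∀ η, 0 ≤ μ η) :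
    D0 N (sqrtDensity μ (bernProf N ρ)) (bernProf N ρ) ≤
      2 * D0 N (sqrtDensity μ (bernProf N ρ₀)) (bernProf N ρ₀) +
        4 * (K / m ^ 2 + K₀ / m₀ ^ 2) ^ 2 * (∑ η, μ η) / N := by
  have pos {θ : ℝ → ℝ} {r : ℝ} (hr : 0 < r) (hθ : MapsTo θ (Icc (-1) 1) (Icc r (1 - r))) :
      ∀ η, 0 < bernProf N θ η :=
    bernProf_pos (hθ.mono_right (Icc_subset_Ioo hr (sub_lt_self 1 hr)))
  refine (D0_sqrtDensity_le (ε := K / m ^ 2 / N + K₀ / m₀ ^ 2 / N) hμ (pos hm hρ) (pos hm₀ hρ₀)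
    fun x hx η ↦ ?_).trans_eq ?_
  · refine (abs_sub_le _ 1 _).trans (add_le_add ?_ ?_)
    · exact abs_sqrt_bernProf_div_exchC_sub_one_le hm hρ hK hx η
    · rw [abs_sub_comm]
      exact abs_sqrt_bernProf_div_exchC_sub_one_le hm₀ hρ₀ hK₀ hx η
  · field_simp

end Lattice

theorem dirichlet_change_of_reference_general {ρ ρ₀ : ℝ → ℝ}
    (hρ : LocallyLipschitzOn (Icc (-1) 1) ρ) (hρ₀ : LocallyLipschitzOn (Icc (-1) 1) ρ₀)
    (hρ_range : MapsTo ρ (Icc (-1) 1) (Ioo 0 1)) (hρ₀_range : MapsTo ρ₀ (Icc (-1) 1) (Ioo 0 1)) :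
    ∃ C > 0, ∀ N : ℕ, 1 ≤ N → ∀ μ : Conf N → ℝ, (∀ η, 0 ≤ μ η) →
      D0 N (fun η ↦ √(μ η / bernProf N ρ η)) (bernProf N ρ) ≤
        2 * D0 N (fun η ↦ √(μ η / bernProf N ρ₀ η)) (bernProf N ρ₀) + C * (∑ η, μ η) / N := by
  obtain ⟨K, hK⟩ := hρ.exists_lipschitzOnWith_of_compact isCompact_Icc
  obtain ⟨K₀, hK₀⟩ := hρ₀.exists_lipschitzOnWith_of_compact isCompact_Icc
  obtain ⟨m, hm, hρm⟩ :=
    exists_mapsTo_Icc_of_mapsTo_Ioo isCompact_Icc hK.continuousOn hρ_range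
  obtain ⟨m₀, hm₀, hρ₀m₀⟩ :=
    exists_mapsTo_Icc_of_mapsTo_Ioo isCompact_Icc hK₀.continuousOn hρ₀_range
  rw [zero_add] at hρm hρ₀m₀
  refine ⟨4 * (K / m ^ 2 + K₀ / m₀ ^ 2) ^ 2 + 1, by positivity, fun N _ μ hμ ↦ ?_⟩
  refine (D0_sqrtDensity_bernProf_le hm hm₀ hρm hρ₀m₀ hK hK₀ hμ).trans (add_le_add le_rfl ?_)
  have mass_nonneg : 0 ≤ ∑ η, μ η := Finset.sum_nonneg fun η _ ↦ hμ η
  gcongr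
  exact le_add_of_nonneg_right zero_le_one

/-- change of reference measure in the Dirichlet form:
`D_{0,N}(√(dμ/dν^ρ), ν^ρ) ≤ 2 D_{0,N}(√(dμ/dν^{ρ₀}), ν^{ρ₀}) + C₀'/N`. -/
theorem dirichlet_change_of_reference
    (ρ ρ₀ : ℝ → ℝ)
    (hρ : ContDiff ℝ 1 ρ) (hρ₀ : ContDiff ℝ 1 ρ₀)
    (hρ_range : ∀ u ∈ Icc (-1:ℝ) 1, ρ u ∈ Ioo (0:ℝ) 1)
    (hρ₀_range : ∀ u ∈ Icc (-1:ℝ) 1, ρ₀ u ∈ Ioo (0:ℝ) 1) :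
    ∃ C > 0, ∀ N : ℕ, 1 ≤ N →
      ∀ μ : Conf N → ℝ, (∀ η, 0 ≤ μ η) → (∑ η : Conf N, μ η) = 1 →
        D0 N (fun η => Real.sqrt (μ η / bernProf N ρ η)) (bernProf N ρ) ≤
          2 * D0 N (fun η => Real.sqrt (μ η / bernProf N ρ₀ η)) (bernProf N ρ₀)
            + C / (N:ℝ) := by
  obtain ⟨C, hC, hle⟩ := dirichlet_change_of_reference_general
    hρ.locallyLipschitz.locallyLipschitzOn hρ₀.locallyLipschitz.locallyLipschitzOn
    hρ_range hρ₀_range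
  exact ⟨C, hC, fun N hN μ hμ hμ_mass ↦ by simpa [hμ_mass] using hle N hN μ hμ⟩

end
end

section
/- For every C^1 function π : [-1,1] → [0,1], ∫_{-1}^{1} σ(π(u)) ( d/du (J^neum ⋆ π)(u) )² du ≤ (1/2) ∫_{-1}^{1} (π'(v))² dv. -/
open MeasureTheory Set

noncomputable section

/-- The Neumann (reflected) Kac kernel. -/
def Jneum (j : ℝ → ℝ) (u v : ℝ) : ℝ := j (v - u) + j (2 - v - u) + j (-2 - v - u)

/-- Convolution with the Neumann kernel: `(J^neum ⋆ m)(u) = ∫_{-1}^1 J^neum(u,v) m(v) dv`. -/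
def convJ (j m : ℝ → ℝ) (u : ℝ) : ℝ := ∫ v in (-1:ℝ)..1, Jneum j u v * m v

/-- Mobility `σ(ρ) = 2ρ(1-ρ)`. -/
def sigmaMob (ρ : ℝ) : ℝ := 2 * ρ * (1 - ρ)

/-!
Differentiating the even reflections of `j` in `u` is the same, up to sign, as differentiating the
odd reflections in `v`. Integration by parts therefore gives
`d/du (J^neum ⋆ π)(u) = ∫ J^dir(u, v) π'(v) dv`, where the boundary terms vanish because at
`v = ±1` the direct term cancels one reflection and the other lies outside the support of `j`.
Since `|J^dir|` is dominated by the Neumann kernel of `|j|`, which is symmetric with row integrals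
at most `∫ |j|`, Schur's test bounds the operator norm on `L²(-1, 1)` by `∫ |j|`. Finally
`σ ≤ 1/2`.
-/

section SchurTest

variable {α β : Type*} {mα : MeasurableSpace α} {mβ : MeasurableSpace β}
  {μ : Measure α} {ν : Measure β}

lemma sq_integral_mul_le_of_abs_le {k w f : β → ℝ} (hkw : ∀ b, |k b| ≤ w b)
    (hk : AEStronglyMeasurable k ν) (hf : AEStronglyMeasurable f ν) (hw : Integrable w ν)
    (hwf : Integrable (fun b ↦ w b * f b ^ 2) ν) :
    (∫ b, k b * f b ∂ν) ^ 2 ≤ (∫ b, w b ∂ν) * ∫ b, w b * f b ^ 2 ∂ν := by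
  have hkf : Integrable (fun b ↦ k b * f b) ν := by
    refine (hw.add hwf).mono' (hk.mul hf) (.of_forall fun b ↦ ?_)
    calc ‖k b * f b‖ = |k b| * |f b| := abs_mul _ _
      _ ≤ w b * (1 + f b ^ 2) := by
        have : |f b| ≤ 1 + f b ^ 2 := by
          rw [← sq_abs (f b)]; nlinarith [sq_nonneg (|f b| - 1)]
        gcongr
        exacts [(abs_nonneg _).trans (hkw b), hkw b]
      _ = w b + w b * f b ^ 2 := by ring
  have quadratic_nonneg (t : ℝ) : 0 ≤ (∫ b, w b ∂ν) * (t * t) + (2 * ∫ b, k b * f b ∂ν) * t +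
      ∫ b, w b * f b ^ 2 ∂ν := by
    have pointwise_nonneg (b : β) : 0 ≤ w b * (t * t) + 2 * (k b * f b) * t + w b * f b ^ 2 := by
      obtain ⟨hlower, hupper⟩ := abs_le.mp (hkw b)
      nlinarith [mul_nonneg (sub_nonneg.2 hupper) (sq_nonneg (t - f b)),
        mul_nonneg (neg_le_iff_add_nonneg.1 hlower) (sq_nonneg (t + f b))]
    calc 0 ≤ ∫ b, (w b * (t * t) + 2 * (k b * f b) * t + w b * f b ^ 2) ∂ν :=
          integral_nonneg pointwise_nonneg
      _ = _ := by
        have hwt : Integrable (fun b ↦ w b * (t * t)) ν := hw.mul_const _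
        have hkft : Integrable (fun b ↦ 2 * (k b * f b) * t) ν := (hkf.const_mul 2).mul_const t
        rw [integral_add (by exact hwt.add hkft) hwf, integral_add hwt hkft, integral_mul_const,
          integral_mul_const, integral_const_mul]
  have := discrim_le_zero quadratic_nonneg
  rw [discrim] at this
  linarith

variable [SFinite μ] [SFinite ν] {w : α → β → ℝ} {B : ℝ}

lemma integrable_prod_mul_of_integral_le {g : β → ℝ} (hw_nonneg : ∀ a b, 0 ≤ w a b)
    (hw : AEStronglyMeasurable (Function.uncurry w) (μ.prod ν))
    (hcol : ∀ᵐ b ∂ν, Integrable (fun a ↦ w a b) μ) (hB : ∀ᵐ b ∂ν, ∫ a, w a b ∂μ ≤ B)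
    (hg : Integrable g ν) :
    Integrable (fun p : α × β ↦ w p.1 p.2 * g p.2) (μ.prod ν) := by
  have hmeas : AEStronglyMeasurable (fun p : α × β ↦ w p.1 p.2 * g p.2) (μ.prod ν) :=
    hw.mul hg.aestronglyMeasurable.comp_snd
  refine (integrable_prod_iff' hmeas).2 ⟨hcol.mono fun b hb ↦ hb.mul_const (g b), ?_⟩
  refine (hg.norm.const_mul B).mono' hmeas.norm.prod_swap.integral_prod_right' ?_
  filter_upwards [hB] with b hb
  simp only [norm_mul, Real.norm_of_nonneg (hw_nonneg _ b), integral_mul_const]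
  rw [norm_norm, Real.norm_of_nonneg (integral_nonneg fun a ↦ hw_nonneg a b)]
  gcongr

lemma integral_integral_mul_le {g : β → ℝ} (hg_nonneg : ∀ b, 0 ≤ g b)
    (hwg : Integrable (fun p : α × β ↦ w p.1 p.2 * g p.2) (μ.prod ν))
    (hB : ∀ᵐ b ∂ν, ∫ a, w a b ∂μ ≤ B) (hg : Integrable g ν) :
    ∫ a, ∫ b, w a b * g b ∂ν ∂μ ≤ B * ∫ b, g b ∂ν := by
  rw [integral_integral_swap hwg, ← integral_const_mul]
  refine integral_mono_ae hwg.integral_prod_right (hg.const_mul B) ?_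
  filter_upwards [hB] with b hb
  simp only [integral_mul_const]
  exact mul_le_mul_of_nonneg_right hb (hg_nonneg b)

theorem schur_test {k : α → β → ℝ} {f : β → ℝ} {A : ℝ} (hkw : ∀ a b, |k a b| ≤ w a b)
    (hk : AEStronglyMeasurable (Function.uncurry k) (μ.prod ν))
    (hw : AEStronglyMeasurable (Function.uncurry w) (μ.prod ν))
    (hrow : ∀ᵐ a ∂μ, Integrable (w a) ν) (hA_nonneg : 0 ≤ A) (hA : ∀ᵐ a ∂μ, ∫ b, w a b ∂ν ≤ A)
    (hcol : ∀ᵐ b ∂ν, Integrable (fun a ↦ w a b) μ) (hB : ∀ᵐ b ∂ν, ∫ a, w a b ∂μ ≤ B)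
    (hf : MemLp f 2 ν) :
    Integrable (fun a ↦ (∫ b, k a b * f b ∂ν) ^ 2) μ ∧
      ∫ a, (∫ b, k a b * f b ∂ν) ^ 2 ∂μ ≤ A * B * ∫ b, f b ^ 2 ∂ν := by
  have hw_nonneg (a : α) (b : β) : 0 ≤ w a b := (abs_nonneg _).trans (hkw a b)
  have hwf : Integrable (fun p : α × β ↦ w p.1 p.2 * f p.2 ^ 2) (μ.prod ν) :=
    integrable_prod_mul_of_integral_le hw_nonneg hw hcol hB hf.integrable_sq
  have hbound : Integrable (fun a ↦ A * ∫ b, w a b * f b ^ 2 ∂ν) μ :=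
    hwf.integral_prod_left.const_mul A
  have hle : ∀ᵐ a ∂μ, (∫ b, k a b * f b ∂ν) ^ 2 ≤ A * ∫ b, w a b * f b ^ 2 ∂ν := by
    filter_upwards [hrow, hA, hk.prodMk_left, hwf.prod_right_ae] with a hrow_a hA_a hk_a hwf_a
    refine (sq_integral_mul_le_of_abs_le (hkw a) hk_a hf.aestronglyMeasurable hrow_a hwf_a).trans ?_
    exact mul_le_mul_of_nonneg_right hA_a
      (integral_nonneg fun b ↦ mul_nonneg (hw_nonneg a b) (sq_nonneg _))
  have hint : Integrable (fun a ↦ (∫ b, k a b * f b ∂ν) ^ 2) μ := by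
    refine hbound.mono' ((hk.mul hf.aestronglyMeasurable.comp_snd).integral_prod_right'.pow 2) ?_
    filter_upwards [hle] with a ha
    rwa [Real.norm_of_nonneg (sq_nonneg _)]
  refine ⟨hint, ?_⟩
  calc ∫ a, (∫ b, k a b * f b ∂ν) ^ 2 ∂μ
      ≤ ∫ a, A * ∫ b, w a b * f b ^ 2 ∂ν ∂μ := integral_mono_ae hint hbound hle
    _ = A * ∫ a, ∫ b, w a b * f b ^ 2 ∂ν ∂μ := integral_const_mul _ _
    _ ≤ A * (B * ∫ b, f b ^ 2 ∂ν) := by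
      gcongr
      exact integral_integral_mul_le (fun b ↦ sq_nonneg _) hwf hB hf.integrable_sq
    _ = A * B * ∫ b, f b ^ 2 ∂ν := (mul_assoc ..).symm

end SchurTest

section Kernels

variable {j : ℝ → ℝ}

/-- The Dirichlet counterpart of `Jneum`: the reflections of `j` at the endpoints `±1` enter with a
minus sign. It is the kernel through which `d/du (J^neum ⋆ π)` acts on `π'`. -/
def Jdir (j : ℝ → ℝ) (u v : ℝ) : ℝ := j (v - u) - j (2 - v - u) - j (-2 - v - u)

lemma abs_Jdir_le_Jneum_abs (j : ℝ → ℝ) (u v : ℝ) : |Jdir j u v| ≤ Jneum (fun x ↦ |j x|) u v :=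
  (abs_sub _ _).trans (add_le_add_left (abs_sub _ _) _)

lemma Jneum_comm (hj_even : ∀ x, j (-x) = j x) (u v : ℝ) : Jneum j u v = Jneum j v u := by
  rw [Jneum, Jneum, ← hj_even (v - u), neg_sub, sub_right_comm 2, sub_right_comm (-2)]

lemma continuous_uncurry_Jneum (hj : Continuous j) : Continuous (Function.uncurry (Jneum j)) := by
  unfold Jneum Function.uncurry
  fun_prop

lemma continuous_uncurry_Jdir (hj : Continuous j) : Continuous (Function.uncurry (Jdir j)) := by
  unfold Jdir Function.uncurry
  fun_prop

lemma integral_Jneum_eq (hj : Continuous j) (u : ℝ) :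
    ∫ v in (-1 : ℝ)..1, Jneum j u v = ∫ x in (-3 - u)..(3 - u), j x := by
  have hint (a b : ℝ) : IntervalIntegrable j volume a b := hj.intervalIntegrable a b
  have direct : ∫ v in (-1 : ℝ)..1, j (v - u) = ∫ x in (-1 - u)..(1 - u), j x := by simp
  have reflected (c : ℝ) :
      ∫ v in (-1 : ℝ)..1, j (c - v - u) = ∫ x in (c - 1 - u)..(c + 1 - u), j x := by
    simp_rw [sub_right_comm c _ u]
    rw [intervalIntegral.integral_comp_sub_left]
    congr 1; ring
  have right := reflected 2
  have left := reflected (-2)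
  norm_num at right left
  simp only [Jneum]
  rw [intervalIntegral.integral_add (Continuous.intervalIntegrable (by fun_prop) _ _)
      (Continuous.intervalIntegrable (by fun_prop) _ _),
    intervalIntegral.integral_add (Continuous.intervalIntegrable (by fun_prop) _ _)
      (Continuous.intervalIntegrable (by fun_prop) _ _), direct, right, left,
    intervalIntegral.integral_add_adjacent_intervals (hint _ _) (hint _ _), add_comm,
    intervalIntegral.integral_add_adjacent_intervals (hint _ _) (hint _ _)]

lemma integral_Jneum_le (hj : Continuous j) (hj_nonneg : ∀ x, 0 ≤ j x) (hj_int : Integrable j)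
    (u : ℝ) : ∫ v in (-1 : ℝ)..1, Jneum j u v ≤ ∫ x, j x := by
  rw [integral_Jneum_eq hj, intervalIntegral.integral_of_le (by linarith)]
  exact setIntegral_le_integral hj_int (.of_forall hj_nonneg)

theorem schur_test_Jdir (hj : Continuous j) (hj_even : ∀ x, j (-x) = j x) (hj_int : Integrable j)
    {f : ℝ → ℝ} (hf : MemLp f 2 (volume.restrict (Ioc (-1) 1))) :
    IntervalIntegrable (fun u ↦ (∫ v in (-1 : ℝ)..1, Jdir j u v * f v) ^ 2) volume (-1) 1 ∧
      ∫ u in (-1 : ℝ)..1, (∫ v in (-1 : ℝ)..1, Jdir j u v * f v) ^ 2 ≤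
        (∫ x, |j x|) ^ 2 * ∫ v in (-1 : ℝ)..1, f v ^ 2 := by
  have hle : (-1 : ℝ) ≤ 1 := by norm_num
  have hw := continuous_uncurry_Jneum hj.abs
  have hrow (u : ℝ) : IntegrableOn (Jneum (fun x ↦ |j x|) u) (Ioc (-1) 1) :=
    (hw.uncurry_left u).integrableOn_Ioc
  have hmass (u : ℝ) : ∫ v in Ioc (-1 : ℝ) 1, Jneum (fun x ↦ |j x|) u v ≤ ∫ x, |j x| := by
    rw [← intervalIntegral.integral_of_le hle]
    exact integral_Jneum_le hj.abs (fun x ↦ abs_nonneg _) hj_int.abs u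
  have hsymm (v : ℝ) : (fun u ↦ Jneum (fun x ↦ |j x|) u v) = Jneum (fun x ↦ |j x|) v :=
    funext fun u ↦ Jneum_comm (fun x ↦ by rw [hj_even]) u v
  simp only [intervalIntegrable_iff_integrableOn_Ioc_of_le hle,
    intervalIntegral.integral_of_le hle]
  rw [sq (∫ x, |j x|)]
  exact schur_test (abs_Jdir_le_Jneum_abs j) (continuous_uncurry_Jdir hj).aestronglyMeasurable
    hw.aestronglyMeasurable (.of_forall hrow) (integral_nonneg fun x ↦ abs_nonneg _)
    (.of_forall hmass) (.of_forall fun v ↦ by rw [hsymm]; exact hrow v)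
    (.of_forall fun v ↦ by rw [hsymm]; exact hmass v) hf

end Kernels

section Derivative

variable {j : ℝ → ℝ}

lemma hasDerivAt_Jneum_left (hj : ContDiff ℝ 1 j) (u v : ℝ) :
    HasDerivAt (fun x ↦ Jneum j x v) (-Jneum (deriv j) u v) u := by
  have hcomp (c : ℝ) : HasDerivAt (fun x ↦ j (c - x)) (-deriv j (c - u)) u :=
    (hj.differentiable one_ne_zero _).hasDerivAt.comp_const_sub c u
  exact (((hcomp v).add (hcomp (2 - v))).add (hcomp (-2 - v))).congr_deriv (by rw [Jneum]; ring)

lemma hasDerivAt_Jdir_right (hj : ContDiff ℝ 1 j) (u v : ℝ) :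
    HasDerivAt (Jdir j u) (Jneum (deriv j) u v) v := by
  have hderiv (x : ℝ) : HasDerivAt j (deriv j x) x := (hj.differentiable one_ne_zero x).hasDerivAt
  have hcomp (c : ℝ) : HasDerivAt (fun y ↦ j (c - y - u)) (-deriv j (c - v - u)) v := by
    have := (hderiv (c - u - v)).comp_const_sub (c - u) v
    simpa only [sub_right_comm c u] using this
  exact ((((hderiv _).comp_sub_const v u).sub (hcomp 2)).sub (hcomp (-2))).congr_deriv
    (by rw [Jneum]; ring)

lemma hasDerivAt_convJ (hj : ContDiff ℝ 1 j) {m : ℝ → ℝ}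
    (hm : IntervalIntegrable m volume (-1) 1) (u : ℝ) :
    HasDerivAt (convJ j m) (-convJ (deriv j) m u) u := by
  have hJ := continuous_uncurry_Jneum hj.continuous
  have hJ' := continuous_uncurry_Jneum (hj.continuous_deriv le_rfl)
  obtain ⟨C, hC⟩ := ((isCompact_closedBall u 1).prod isCompact_uIcc).exists_bound_of_continuousOn
    (hJ'.continuousOn (s := Metric.closedBall u 1 ×ˢ uIcc (-1) 1))
  have hmul {k : ℝ → ℝ} (hk : Continuous k) :
      IntervalIntegrable (fun v ↦ k v * m v) volume (-1) 1 := hm.continuousOn_mul hk.continuousOn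
  rw [convJ, ← intervalIntegral.integral_neg]
  refine (intervalIntegral.hasDerivAt_integral_of_dominated_loc_of_deriv_le
    (F' := fun x v ↦ -(Jneum (deriv j) x v * m v)) (bound := fun v ↦ C * ‖m v‖)
    (Metric.closedBall_mem_nhds u one_pos)
    (.of_forall fun x ↦ (hmul (hJ.uncurry_left x)).def'.aestronglyMeasurable)
    (hmul (hJ.uncurry_left u)) (hmul (hJ'.uncurry_left u)).neg.def'.aestronglyMeasurable
    (.of_forall fun v hv x hx ↦ ?_) (hm.norm.const_mul C) (.of_forall fun v _ x _ ↦ ?_)).2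
  · rw [norm_neg, norm_mul]
    gcongr
    exact hC (x, v) ⟨hx, uIoc_subset_uIcc hv⟩
  · exact ((hasDerivAt_Jneum_left hj x v).mul_const (m v)).congr_deriv (neg_mul _ _)

lemma Jdir_endpoints_eq_zero (hj_supp : ∀ x, 2 ≤ |x| → j x = 0) {u : ℝ}
    (hu : u ∈ Icc (-1 : ℝ) 1) : Jdir j u (-1) = 0 ∧ Jdir j u 1 = 0 := by
  have hright : j (3 - u) = 0 := hj_supp _ (le_abs.2 (.inl (by linarith [hu.2])))
  have hleft : j (-3 - u) = 0 := hj_supp _ (le_abs.2 (.inr (by linarith [hu.1])))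
  constructor <;> norm_num [Jdir, hright, hleft]

theorem deriv_convJ_eq_integral_Jdir (hj : ContDiff ℝ 1 j) (hj_supp : ∀ x, 2 ≤ |x| → j x = 0)
    {u : ℝ} (hu : u ∈ Icc (-1 : ℝ) 1) {π : ℝ → ℝ}
    (hπ : AbsolutelyContinuousOnInterval π (-1) 1) :
    deriv (convJ j π) u = ∫ v in (-1 : ℝ)..1, Jdir j u v * deriv π v := by
  have hJdir : AbsolutelyContinuousOnInterval (Jdir j u) (-1) 1 := by
    refine ContDiffOn.absolutelyContinuousOnInterval (ContDiff.contDiffOn ?_)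
    unfold Jdir
    fun_prop
  obtain ⟨hleft, hright⟩ := Jdir_endpoints_eq_zero hj_supp hu
  rw [(hasDerivAt_convJ hj hπ.continuousOn.intervalIntegrable u).deriv,
    hJdir.integral_mul_deriv_eq_deriv_mul hπ, hleft, hright, zero_mul, zero_mul, sub_self, zero_sub]
  simp only [(hasDerivAt_Jdir_right hj u _).deriv, convJ]

end Derivative

lemma sigmaMob_le_half (ρ : ℝ) : sigmaMob ρ ≤ 1 / 2 := by
  rw [sigmaMob]
  linarith [sq_nonneg (2 * ρ - 1)]

lemma continuous_sigmaMob : Continuous sigmaMob := by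
  unfold sigmaMob
  fun_prop

theorem conv_energy_bound_general
    (j : ℝ → ℝ)
    (hj_smooth : ContDiff ℝ 1 j)
    (hj_even : ∀ u, j (-u) = j u)
    (hj_supp : ∀ u : ℝ, 2 ≤ |u| → j u = 0)
    (π : ℝ → ℝ) (hπ : AbsolutelyContinuousOnInterval π (-1) 1)
    (hπ_deriv : IntervalIntegrable (fun v ↦ deriv π v ^ 2) volume (-1) 1) :
    ∫ u in (-1 : ℝ)..1, sigmaMob (π u) * (deriv (convJ j π) u) ^ 2 ≤
      (1 / 2) * ((∫ u, |j u|) ^ 2 * ∫ v in (-1 : ℝ)..1, (deriv π v) ^ 2) := by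
  have hle : (-1 : ℝ) ≤ 1 := by norm_num
  have hj_int : Integrable j := hj_smooth.continuous.integrable_of_hasCompactSupport <|
    .intro (isCompact_closedBall 0 2) fun x hx ↦ hj_supp x <| by
      rw [mem_closedBall_zero_iff, Real.norm_eq_abs] at hx
      exact (not_le.1 hx).le
  obtain ⟨hint, hschur⟩ := schur_test_Jdir hj_smooth.continuous hj_even hj_int
    ((memLp_two_iff_integrable_sq (measurable_deriv π).aestronglyMeasurable).2 hπ_deriv.1)
  calc ∫ u in (-1 : ℝ)..1, sigmaMob (π u) * (deriv (convJ j π) u) ^ 2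
      = ∫ u in (-1 : ℝ)..1, sigmaMob (π u) * (∫ v in (-1 : ℝ)..1, Jdir j u v * deriv π v) ^ 2 := by
        refine intervalIntegral.integral_congr fun u hu ↦ ?_
        rw [uIcc_of_le hle] at hu
        simp only [deriv_convJ_eq_integral_Jdir hj_smooth hj_supp hu hπ]
    _ ≤ ∫ u in (-1 : ℝ)..1, (1 / 2) * (∫ v in (-1 : ℝ)..1, Jdir j u v * deriv π v) ^ 2 :=
        intervalIntegral.integral_mono_on hle
          (hint.continuousOn_mul (continuous_sigmaMob.comp_continuousOn hπ.continuousOn))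
          (hint.const_mul _)
          fun u _ ↦ mul_le_mul_of_nonneg_right (sigmaMob_le_half _) (sq_nonneg _)
    _ = (1 / 2) * ∫ u in (-1 : ℝ)..1, (∫ v in (-1 : ℝ)..1, Jdir j u v * deriv π v) ^ 2 :=
        intervalIntegral.integral_const_mul _ _
    _ ≤ _ := by gcongr

/-- for every `C¹` density `π : [-1,1] → [0,1]`,
`∫ σ(π) (d/du (J^neum ⋆ π))² ≤ (1/2) ∫ (π')²`. -/
theorem conv_energy_bound
    (j : ℝ → ℝ)
    (hj_smooth : ContDiff ℝ 1 j)
    (hj_nonneg : ∀ u, 0 ≤ j u)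
    (hj_even : ∀ u, j (-u) = j u)
    (hj_supp : ∀ u : ℝ, 1 < |u| → j u = 0)
    (hj_int : (∫ u : ℝ, j u) = 1)
    (π : ℝ → ℝ) (hπ : ContDiff ℝ 1 π)
    (hπ_range : ∀ u ∈ Icc (-1:ℝ) 1, π u ∈ Icc (0:ℝ) 1) :
    ∫ u in (-1:ℝ)..1, sigmaMob (π u) * (deriv (convJ j π) u)^2 ≤
      (1/2) * ∫ v in (-1:ℝ)..1, (deriv π v)^2 := by
  simpa only [abs_of_nonneg (hj_nonneg _), hj_int, one_pow, one_mul] using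
    conv_energy_bound_general j hj_smooth hj_even (fun u hu ↦ hj_supp u (by linarith)) π
      hπ.contDiffOn.absolutelyContinuousOnInterval
      (((hπ.continuous_deriv le_rfl).pow 2).intervalIntegrable _ _)

end
end
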